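/- The pair (right zero semigroups, groups) is a pretorsion theory in the category of right groups. Concretely: (1) every semigroup morphism from a nonempty right zero semigroup to a group is constant with value the identity of the group; (2) for every right group S, writing E := E(S), i: E → S for the inclusion and π: S → S/∼ for the canonical projection, the sequence E → S → S/∼ is short Z-preexact, where Z is the class of one-element semigroups and the Z-trivial morphisms are the constant ones: π ∘ i is constant; for every right group Y and every semigroup morphism λ: Y → S with π ∘ λ constant, there is a unique semigroup morphism λ': Y → E with λ = i ∘ λ'; and for every right group T and every semigroup morphism μ: S → T with μ ∘ i constant, there is a unique semigroup morphism μ': S/∼ → T with μ = μ' ∘ π. Here E is a right zero semigroup and S/∼ is a group. -/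

import Mathlib

/-!
In a left cancellative semigroup every idempotent is a left identity, so the idempotents form a
right zero semigroup; right simplicity gives every `x` an idempotent right identity.

If `π` is the quotient by `∼`, then `π (x * x) = π x` reads `x * x * e = x * e` for some
idempotent `e`, and cancelling `x` gives `x * e = e`, whence `x * x = x * (e * x) = e * x = x`.
So `π` reflects idempotents, which is what the prekernel property needs. If `μ` takes a
single value `t` on the idempotents, then `μ x * t = μ x` for all `x`, because `x` has an idempotent
right identity; hence `x * e = y * e` forces `μ x = μ y`, and `μ` factors through `π`.
-/

open Function

section MulHom

variable {M N P : Type*} [Mul M] [Mul N] [Mul P]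

theorem map_eq_one_of_isIdempotentElem {G : Type*} [MulOneClass G] [IsLeftCancelMul G]
    (φ : M →ₙ* G) {d : M} (hd : IsIdempotentElem d) : φ d = 1 :=
  mul_left_cancel (a := φ d) ((hd.map φ).eq.trans (mul_one _).symm)

theorem existsUnique_eq_subtype_comp (f : M →ₙ* N) (E : Subsemigroup N) (hf : ∀ x, f x ∈ E) :
    ∃! f' : M →ₙ* E, f = (MulMemClass.subtype E).comp f' :=
  ⟨f.codRestrict E hf, rfl, fun _ hg => MulHom.ext fun x =>
    Subtype.ext (DFunLike.congr_fun hg x).symm⟩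

theorem existsUnique_eq_comp_of_surjective {π : M →ₙ* N} (hπ : Surjective π) (f : M →ₙ* P)
    (hf : ∀ x y, π x = π y → f x = f y) : ∃! f' : N →ₙ* P, f = f'.comp π := by
  have f_surjInv (x : M) : f (surjInv hπ (π x)) = f x := hf _ _ (surjInv_eq hπ _)
  let f' : N →ₙ* P :=
    { toFun := fun q => f (surjInv hπ q)
      map_mul' := hπ.forall₂.mpr fun x y => by
        rw [← map_mul, f_surjInv, f_surjInv, f_surjInv, map_mul] }
  have f_eq : f = f'.comp π := MulHom.ext fun x => (f_surjInv x).symm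
  exact ⟨f', f_eq, fun _ hg => (MulHom.cancel_right hπ).mp (hg.symm.trans f_eq)⟩

end MulHom

theorem group_axioms_of_right_axioms {Q : Type*} [Semigroup Q] {e : Q} (mul_e : ∀ q, q * e = q)
    (exists_mul_eq_e : ∀ q, ∃ q', q * q' = e) :
    (∀ q, e * q = q ∧ q * e = q) ∧ ∀ q, ∃ q', q * q' = e ∧ q' * q = e := by
  choose inv mul_inv using exists_mul_eq_e
  let _ : One Q := ⟨e⟩
  let _ : Inv Q := ⟨inv⟩
  let _ : Group Q := Group.ofRightAxioms mul_assoc mul_e mul_inv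
  exact ⟨fun q => ⟨one_mul q, mul_one q⟩, fun q => ⟨q⁻¹, mul_inv_cancel q, inv_mul_cancel q⟩⟩

/-- A right group: a nonempty semigroup that is left cancellative and right simple. Right
simplicity `a S = S` is expressed as surjectivity of all left multiplications. -/
class IsRightGroup (S : Type*) [Semigroup S] : Prop extends IsLeftCancelMul S where
  nonempty : Nonempty S
  mul_left_surjective (a : S) : Surjective (a * ·)

/-- `π : S → Q` realizes the projection `S → S/∼`: it is onto, and its kernel is the relation `∼`
identifying `x` and `y` when `x * e = y * e` for some idempotent `e`. -/
structure IsIdempotentQuotient {S Q : Type*} [Mul S] [Mul Q] (π : S →ₙ* Q) : Prop where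
  surjective : Surjective π
  map_eq_iff (x y : S) : π x = π y ↔ ∃ e : S, IsIdempotentElem e ∧ x * e = y * e

section LeftCancel

variable {S : Type*} [Semigroup S] [IsLeftCancelMul S]

theorem mul_eq_right_of_isIdempotentElem {e : S} (he : IsIdempotentElem e) (a : S) :
    e * a = a :=
  mul_left_cancel (a := e) (by rw [← mul_assoc, he.eq])

theorem isIdempotentElem_of_mul_eq_left {a f : S} (h : a * f = a) : IsIdempotentElem f :=
  mul_left_cancel (a := a) (by rw [← mul_assoc, h, h])

variable (S) in
/-- The set `E(S)` of idempotents, which is closed under products when `S` is left cancellative. -/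
def idempotents : Subsemigroup S where
  carrier := {x | IsIdempotentElem x}
  mul_mem' {a b} ha hb := by rwa [mul_eq_right_of_isIdempotentElem ha b]

theorem idempotents_mul_eq_right (a b : idempotents S) : a * b = b :=
  Subtype.ext (mul_eq_right_of_isIdempotentElem a.2 b)

namespace IsIdempotentQuotient

variable {Q : Type*} [Mul Q] {π : S →ₙ* Q}

theorem map_eq_map (hπ : IsIdempotentQuotient π) {e f : S} (he : IsIdempotentElem e)
    (hf : IsIdempotentElem f) : π e = π f :=
  (hπ.map_eq_iff e f).mpr ⟨f, hf, by rw [mul_eq_right_of_isIdempotentElem he, hf.eq]⟩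

theorem isIdempotentElem_of_map (hπ : IsIdempotentQuotient π) {x : S}
    (hx : IsIdempotentElem (π x)) : IsIdempotentElem x := by
  obtain ⟨e, he, hxe⟩ := (hπ.map_eq_iff (x * x) x).mp (by rw [map_mul, hx.eq])
  have mul_e : x * e = e := mul_left_cancel (by rwa [mul_assoc] at hxe)
  have e_mul : e * x = x := mul_eq_right_of_isIdempotentElem he x
  calc
    x * x = x * e * x := by rw [mul_assoc, e_mul]
    _ = x := by rw [mul_e, e_mul]

theorem existsUnique_prekernel_lift (hπ : IsIdempotentQuotient π) {Y : Type*} [Mul Y]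
    (lam : Y →ₙ* S) (hlam : ∃ q, ∀ y, π (lam y) = q) :
    ∃! lam' : Y →ₙ* idempotents S, lam = (MulMemClass.subtype (idempotents S)).comp lam' := by
  obtain ⟨q, hq⟩ := hlam
  have map_idem (y : Y) : IsIdempotentElem (π (lam y)) := by
    rw [IsIdempotentElem, ← map_mul, ← map_mul, hq, hq]
  exact existsUnique_eq_subtype_comp lam _ fun y => hπ.isIdempotentElem_of_map (map_idem y)

end IsIdempotentQuotient

end LeftCancel

section RightGroup

variable {S : Type*} [Semigroup S] [IsRightGroup S]

theorem exists_isIdempotentElem_mul_eq_left (x : S) : ∃ f, IsIdempotentElem f ∧ x * f = x :=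
  let ⟨f, hf⟩ := IsRightGroup.mul_left_surjective x x
  ⟨f, isIdempotentElem_of_mul_eq_left hf, hf⟩

variable (S) in
theorem exists_isIdempotentElem : ∃ e : S, IsIdempotentElem e :=
  let ⟨x⟩ := IsRightGroup.nonempty (S := S)
  let ⟨e, he, _⟩ := exists_isIdempotentElem_mul_eq_left x
  ⟨e, he⟩

namespace IsIdempotentQuotient

theorem group_axioms {Q : Type*} [Semigroup Q] {π : S →ₙ* Q} (hπ : IsIdempotentQuotient π)
    {e : S} (he : IsIdempotentElem e) :
    (∀ q, π e * q = q ∧ q * π e = q) ∧ ∀ q, ∃ q', q * q' = π e ∧ q' * q = π e := by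
  refine group_axioms_of_right_axioms (hπ.surjective.forall.mpr fun x => ?_)
    (hπ.surjective.forall.mpr fun x => ?_)
  · rw [← map_mul, hπ.map_eq_iff]
    exact ⟨e, he, by rw [mul_assoc, he.eq]⟩
  · obtain ⟨y, hy⟩ := IsRightGroup.mul_left_surjective x e
    exact ⟨π y, by rw [← map_mul, ← hy]⟩

theorem existsUnique_precokernel_desc {Q T : Type*} [Mul Q] [Mul T] {π : S →ₙ* Q}
    (hπ : IsIdempotentQuotient π) (μ : S →ₙ* T) (hμ : ∃ t, ∀ e, IsIdempotentElem e → μ e = t) :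
    ∃! μ' : Q →ₙ* T, μ = μ'.comp π := by
  obtain ⟨t, ht⟩ := hμ
  have map_mul_t (x : S) : μ x * t = μ x := by
    obtain ⟨f, hf, hxf⟩ := exists_isIdempotentElem_mul_eq_left x
    rw [← ht f hf, ← map_mul, hxf]
  refine existsUnique_eq_comp_of_surjective hπ.surjective μ fun x y hxy => ?_
  obtain ⟨e, he, hxye⟩ := (hπ.map_eq_iff x y).mp hxy
  calc
    μ x = μ (x * e) := by rw [map_mul, ht e he, map_mul_t]
    _ = μ (y * e) := by rw [hxye]
    _ = μ y := by rw [map_mul, ht e he, map_mul_t]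

end IsIdempotentQuotient

end RightGroup

theorem stmt_19_general :
    (∀ (D : Type*) [Mul D], (∀ a : D, IsIdempotentElem a) →
      ∀ (G : Type*) [MulOneClass G] [IsLeftCancelMul G] (φ : D →ₙ* G) (d : D), φ d = 1) ∧
    (∀ (S : Type*) [Semigroup S] [IsRightGroup S] (Q : Type*) [Semigroup Q] (π : S →ₙ* Q),
      IsIdempotentQuotient π →
        (∀ a b : idempotents S, a * b = b) ∧
        (∃ qe : Q, (∀ q : Q, qe * q = q ∧ q * qe = q) ∧
          ∀ q : Q, ∃ q' : Q, q * q' = qe ∧ q' * q = qe) ∧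
        (∃ q₀ : Q, ∀ x : idempotents S, π (x : S) = q₀) ∧
        (∀ (Y : Type*) [Mul Y] (lam : Y →ₙ* S), (∃ q : Q, ∀ y : Y, π (lam y) = q) →
          ∃! lam' : Y →ₙ* idempotents S,
            lam = (MulMemClass.subtype (idempotents S)).comp lam') ∧
        (∀ (T : Type*) [Mul T] (μ : S →ₙ* T), (∃ t : T, ∀ e : S, IsIdempotentElem e → μ e = t) →
          ∃! μ' : Q →ₙ* T, μ = μ'.comp π)) := by
  refine ⟨fun D _ hD G _ _ φ d => map_eq_one_of_isIdempotentElem φ (hD d),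
    fun S _ _ Q _ π hπ => ?_⟩
  obtain ⟨e, he⟩ := exists_isIdempotentElem S
  exact ⟨idempotents_mul_eq_right, ⟨π e, hπ.group_axioms he⟩,
    ⟨π e, fun x => hπ.map_eq_map x.2 he⟩,
    fun _ _ => hπ.existsUnique_prekernel_lift, fun _ _ => hπ.existsUnique_precokernel_desc⟩

/-- Theorem: the pair (right zero semigroups, groups) is a pretorsion theory in the
category of right groups. (1) Every semigroup morphism from a nonempty right zero
semigroup to a group is constant with value the identity. (2) For every right group
`S`, with `E = E(S)`, `i : E → S` the inclusion and `π : S → S/∼` the canonical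
projection (realized as any surjective semigroup morphism `π : S → Q` with kernel `∼`),
`E` is a right zero semigroup, `Q ≅ S/∼` is a group, and the sequence `E → S → Q` is
short Z-preexact: `π ∘ i` is constant, `i` is a Z-prekernel of `π`, and `π` is a
Z-precokernel of `i` (where the Z-trivial morphisms are the constant ones). -/
theorem stmt_19 :
    -- (1) morphisms from nonempty right zero semigroups to groups are Z-trivial
    (∀ (D : Type) [Semigroup D], Nonempty D → (∀ a b : D, a * b = b) →
      ∀ (G : Type) [Group G] (φ : D →ₙ* G) (d : D), φ d = 1) ∧
    -- (2) the short Z-preexact sequence E → S → S/∼ for every right group S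
    (∀ (S : Type) [Semigroup S], Nonempty S → (∀ a b : S, ∃ x : S, a * x = b) →
      (∀ a b c : S, a * b = a * c → b = c) →
      ∀ (Q : Type) [Semigroup Q] (π : S →ₙ* Q), Function.Surjective π →
      (∀ x y : S, π x = π y ↔ ∃ e : S, e * e = e ∧ x * e = y * e) →
      ∃ E : Subsemigroup S, (E : Set S) = {x : S | x * x = x} ∧
        -- E is a right zero semigroup
        (∀ a b : E, a * b = b) ∧
        -- Q = S/∼ is a group
        (∃ qe : Q, (∀ q : Q, qe * q = q ∧ q * qe = q) ∧
          ∀ q : Q, ∃ q' : Q, q * q' = qe ∧ q' * q = qe) ∧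
        -- π ∘ i is Z-trivial (constant)
        (∃ q₀ : Q, ∀ x : E, π (x : S) = q₀) ∧
        -- i is a Z-prekernel of π
        (∀ (Y : Type) [Semigroup Y], Nonempty Y → (∀ a b : Y, ∃ x : Y, a * x = b) →
          (∀ a b c : Y, a * b = a * c → b = c) →
          ∀ lam : Y →ₙ* S, (∃ q : Q, ∀ y : Y, π (lam y) = q) →
            ∃! lam' : Y →ₙ* E, lam = (MulMemClass.subtype E).comp lam') ∧
        -- π is a Z-precokernel of i
        (∀ (T : Type) [Semigroup T], Nonempty T → (∀ a b : T, ∃ x : T, a * x = b) →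
          (∀ a b c : T, a * b = a * c → b = c) →
          ∀ μ : S →ₙ* T, (∃ t : T, ∀ e : S, e * e = e → μ e = t) →
            ∃! μ' : Q →ₙ* T, μ = μ'.comp π)) := by
  obtain ⟨map_eq_one, preexact⟩ := stmt_19_general
  refine ⟨fun D _ _ hD G _ => map_eq_one D (fun a => hD a a) G,
    fun S _ hS hrs hlc Q _ π hπ hker => ?_⟩
  have : IsRightGroup S := { mul_left_cancel := hlc, nonempty := hS, mul_left_surjective := hrs }
  obtain ⟨hE, hQ, hconst, hprekernel, hprecokernel⟩ := preexact S Q π ⟨hπ, hker⟩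
  exact ⟨idempotents S, rfl, hE, hQ, hconst, fun Y _ _ _ _ => hprekernel Y,
    fun T _ _ _ _ => hprecokernel T⟩
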